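/- A strictly-convex spherical polygon with n edges is uniquely determined up to isometry of the sphere by all n of its interior angles together with any n−3 of its edge lengths. -/

import Mathlib

noncomputable section
open Real
open scoped RealInnerProductSpace

/-- Euclidean 3-space; the unit sphere in it is the 2-sphere `S²`. -/
abbrev E3 : Type := EuclideanSpace ℝ (Fin 3)

/-- The determinant (triple product) of three vectors in `ℝ³`.  For unit
vectors `p, x, q`, the condition `0 < det3 p x q` says that `q` lies strictly
on the left of the oriented great circle through `p` and `x`; at a vertex `x`
of a spherical polygon with neighbours `p, q` this is equivalent to the
interior angle at `x` (measured on the left side) being strictly less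
than `π`. -/
def det3 (u v w : E3) : ℝ :=
  u 0 * (v 1 * w 2 - v 2 * w 1) - u 1 * (v 0 * w 2 - v 2 * w 0) +
    u 2 * (v 0 * w 1 - v 1 * w 0)

/-- The (short) geodesic arc on the unit sphere joining two unit vectors
`v` and `w`: the radial projection of the segment between them. -/
def arcSeg (v w : E3) : Set E3 :=
  {x | ∃ a b : ℝ, 0 ≤ a ∧ 0 ≤ b ∧ 0 < a + b ∧
    x = ‖a • v + b • w‖⁻¹ • (a • v + b • w)}

/-- The spherical (great-circle) distance between two unit vectors. -/
def sdist (v w : E3) : ℝ := Real.arccos ⟪v, w⟫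

/-- The spherical angle at `x` between the geodesics from `x` toward `p` and
from `x` toward `q`: the angle between the tangent directions, valued
in `[0, π]`. -/
def sangle (p x q : E3) : ℝ :=
  InnerProductGeometry.angle (p - ⟪p, x⟫ • x) (q - ⟪q, x⟫ • x)

/-- A strictly-convex spherical polygon: unit vertices, interior angles
(measured on the left) strictly less than `π`, no self-intersections, and
contained in the interior of a hemisphere. -/
def StrictlyConvexSphPolygon (m : ℕ) (v : Fin (m + 3) → E3) : Prop :=
  (∀ i, ‖v i‖ = 1) ∧
  (∀ i : Fin (m + 3), 0 < det3 (v (i - 1)) (v i) (v (i + 1))) ∧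
  (∀ i : Fin (m + 3),
    arcSeg (v i) (v (i + 1)) ∩ arcSeg (v (i + 1)) (v (i + 2)) = {v (i + 1)}) ∧
  (∀ i j : Fin (m + 3), j ≠ i → j ≠ i + 1 → i ≠ j + 1 →
    Disjoint (arcSeg (v i) (v (i + 1))) (arcSeg (v j) (v (j + 1)))) ∧
  (∃ u : E3, ‖u‖ = 1 ∧
    ∀ i : Fin (m + 3), ∀ x ∈ arcSeg (v i) (v (i + 1)), 0 < ⟪x, u⟫)


lemma inn (x y : E3) : ⟪x, y⟫ = x 0 * y 0 + x 1 * y 1 + x 2 * y 2 := by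
  simp [PiLp.inner_apply, Fin.sum_univ_three]; ring

/-- cross product -/
def cr (x y : E3) : E3 :=
  !₂[x 1 * y 2 - x 2 * y 1, x 2 * y 0 - x 0 * y 2, x 0 * y 1 - x 1 * y 0]

@[simp] lemma cr0 (x y : E3) : cr x y 0 = x 1 * y 2 - x 2 * y 1 := by simp [cr]
@[simp] lemma cr1 (x y : E3) : cr x y 1 = x 2 * y 0 - x 0 * y 2 := by simp [cr]
@[simp] lemma cr2 (x y : E3) : cr x y 2 = x 0 * y 1 - x 1 * y 0 := by simp [cr]

lemma E3ext {x y : E3} (h0 : x 0 = y 0) (h1 : x 1 = y 1) (h2 : x 2 = y 2) : x = y := by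
  ext i; fin_cases i <;> assumption

lemma det3_cyc (a b c : E3) : det3 a b c = det3 b c a := by simp only [det3]; ring

lemma det3_lin (a b x y : E3) (s t : ℝ) :
    det3 a b (s • x + t • y) = s * det3 a b x + t * det3 a b y := by
  simp only [det3, PiLp.add_apply, PiLp.smul_apply, smul_eq_mul]; ring

lemma det3_aba (a b : E3) : det3 a b a = 0 := by simp only [det3]; ring
lemma det3_abb (a b : E3) : det3 a b b = 0 := by simp only [det3]; ring
lemma det3_aab (a b : E3) : det3 a a b = 0 := by simp only [det3]; ring

lemma det3_smul3 (a b c : E3) (s t r : ℝ) :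
    det3 (s • a) (t • b) (r • c) = s * t * r * det3 a b c := by
  simp only [det3, PiLp.smul_apply, smul_eq_mul]; ring

lemma cont_det3 (a b : E3) : Continuous (fun x : E3 => det3 a b x) := by
  unfold det3; fun_prop

lemma span_of_det_zero {a b c x : E3} (h : 0 < det3 a b c) (hx : det3 a b x = 0) :
    ∃ α β : ℝ, x = α • a + β • b := by
  refine ⟨det3 x b c / det3 a b c, det3 a x c / det3 a b c, ?_⟩
  have h' := h.ne'
  apply E3ext <;> simp only [PiLp.add_apply, PiLp.smul_apply, smul_eq_mul] <;> field_simp <;>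
    simp only [det3] at hx ⊢
  · linear_combination (c 0) * hx
  · linear_combination (c 1) * hx
  · linear_combination (c 2) * hx

/-- uniqueness -/
lemma uni {p q x y : E3} (hx : 0 < det3 p q x) (hy : 0 < det3 p q y)
    (hp : ⟪p, x⟫ = ⟪p, y⟫) (hq : ⟪q, x⟫ = ⟪q, y⟫) (hn : ⟪x, x⟫ = ⟪y, y⟫) : x = y := by
  have gram : ∀ z : E3, det3 p q z ^ 2 = ⟪p, p⟫ * (⟪q, q⟫ * ⟪z, z⟫ - ⟪q, z⟫ ^ 2)
      - ⟪p, q⟫ * (⟪p, q⟫ * ⟪z, z⟫ - ⟪q, z⟫ * ⟪p, z⟫)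
      + ⟪p, z⟫ * (⟪p, q⟫ * ⟪q, z⟫ - ⟪q, q⟫ * ⟪p, z⟫) := by
    intro z; simp only [inn, det3]; ring
  have hd : det3 p q x = det3 p q y := by
    have : det3 p q x ^ 2 = det3 p q y ^ 2 := by
      rw [gram, gram, hp, hq, hn]
    exact (pow_left_inj₀ hx.le hy.le two_ne_zero).1 this
  have hD := hx.ne'
  -- D * d = ...
  have e0 : ⟪p, x⟫ - ⟪p, y⟫ = 0 := by linarith
  have e1 : ⟪q, x⟫ - ⟪q, y⟫ = 0 := by linarith
  have e2 : det3 p q x - det3 p q y = 0 := by linarith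
  have hc : ⟪cr p q, cr p q⟫ ≠ 0 := by
    intro h0
    have : cr p q = 0 := inner_self_eq_zero.1 h0
    apply hD
    have : det3 p q x = ⟪cr p q, x⟫ := by simp only [inn, det3, cr0, cr1, cr2]; ring
    rw [this, ‹cr p q = 0›, inner_zero_left]
  simp only [inn, det3] at e0 e1 e2 hc
  simp only [cr0, cr1, cr2] at hc
  apply E3ext <;> apply mul_left_cancel₀ hc
  · linear_combination (q 1 * (p 0 * q 1 - p 1 * q 0) - q 2 * (p 2 * q 0 - p 0 * q 2)) * e0 + ((p 2 * q 0 - p 0 * q 2) * p 2 - (p 0 * q 1 - p 1 * q 0) * p 1) * e1 + (p 1 * q 2 - p 2 * q 1) * e2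
  · linear_combination (q 2 * (p 1 * q 2 - p 2 * q 1) - q 0 * (p 0 * q 1 - p 1 * q 0)) * e0 + ((p 0 * q 1 - p 1 * q 0) * p 0 - (p 1 * q 2 - p 2 * q 1) * p 2) * e1 + (p 2 * q 0 - p 0 * q 2) * e2
  · linear_combination (q 0 * (p 2 * q 0 - p 0 * q 2) - q 1 * (p 1 * q 2 - p 2 * q 1)) * e0 + ((p 1 * q 2 - p 2 * q 1) * p 1 - (p 2 * q 0 - p 0 * q 2) * p 0) * e1 + (p 0 * q 1 - p 1 * q 0) * e2

lemma dual_identity (A B C D E F : E3) :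
    det3 A C E * det3 (cr A B) (cr C D) (cr E F) =
      det3 A C D * det3 C E F * det3 A B E + det3 A E F * det3 C D E * det3 A B C := by
  simp only [det3, cr0, cr1, cr2]; ring

lemma lin_rel (z p a b c : E3) :
    ⟪a, z⟫ * det3 p b c - ⟪b, z⟫ * det3 p a c + ⟪c, z⟫ * det3 p a b = ⟪p, z⟫ * det3 a b c := by
  simp only [det3, inn]; ring

lemma plu (o k a b c : E3) :
    det3 o a k * det3 b c k - det3 o b k * det3 a c k + det3 o c k * det3 a b k = 0 := by
  simp only [det3]; ring

structure NP (n : ℕ) (u : E3) (V : ℕ → E3) : Prop where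
  per : ∀ t, V (t + n) = V t
  unit : ∀ t, ‖V t‖ = 1
  turn : ∀ t, 0 < det3 (V t) (V (t + 1)) (V (t + 2))
  adj : ∀ t, arcSeg (V t) (V (t + 1)) ∩ arcSeg (V (t + 1)) (V (t + 2)) = {V (t + 1)}
  disj : ∀ i j, i + 2 ≤ j → j + 2 ≤ i + n →
    Disjoint (arcSeg (V i) (V (i + 1))) (arcSeg (V j) (V (j + 1)))
  pos : ∀ t, 0 < ⟪V t, u⟫

lemma NP.shift {n : ℕ} {u : E3} {V : ℕ → E3} (h : NP n u V) (k : ℕ) :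
    NP n u (fun t => V (k + t)) where
  per t := by rw [← add_assoc]; exact h.per _
  unit t := h.unit _
  turn t := h.turn _
  adj t := h.adj _
  disj i j h1 h2 := h.disj (k + i) (k + j) (by omega) (by omega)
  pos t := h.pos _

lemma mem_arc {a b x : E3} {α β : ℝ} (hα : 0 ≤ α) (hβ : 0 ≤ β) (hx : x = α • a + β • b)
    (h0 : x ≠ 0) : ‖x‖⁻¹ • x ∈ arcSeg a b := by
  refine ⟨α, β, hα, hβ, ?_, by rw [hx]⟩
  rcases hα.eq_or_lt with h | h
  · rcases hβ.eq_or_lt with h' | h'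
    · subst h; subst h'; simp at hx; exact absurd hx h0
    · linarith
  · linarith

lemma left_mem_arc {a b : E3} (ha : ‖a‖ = 1) : a ∈ arcSeg a b := by
  have := mem_arc (a := a) (b := b) (x := a) (α := 1) (β := 0) (by norm_num) le_rfl (by simp)
    (by intro h; simp [h] at ha)
  simpa [ha] using this

lemma NP.ne0 {n : ℕ} {u : E3} {V : ℕ → E3} (h : NP n u V) {t : ℕ} (h0 : 0 < t) (hn : t < n) :
    V t ≠ V 0 := by
  intro e
  have pn : V n = V 0 := by simpa using h.per 0
  by_cases h1 : t = 1
  · subst h1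
    have := h.turn 0
    simp only [zero_add] at this
    rw [e, det3_aab] at this; exact lt_irrefl _ this
  by_cases h2 : t + 1 = n
  · have := h.turn t
    rw [h2, pn, e, det3_aab] at this; exact lt_irrefl _ this
  · have := h.disj 0 t (by omega) (by omega)
    exact Set.disjoint_left.1 this (left_mem_arc (h.unit 0)) (e ▸ left_mem_arc (h.unit t))

lemma NP.ell {n : ℕ} {u : E3} {V : ℕ → E3} (h : NP n u V) (hmin : ∀ t, ⟪V 0, u⟫ ≤ ⟪V t, u⟫) :
    ∃ z : E3, ⟪V 0, z⟫ = 0 ∧ ∀ t, 0 < t → t < n → 0 < ⟪V t, z⟫ := by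
  refine ⟨u - ⟪V 0, u⟫ • V 0, ?_, ?_⟩
  · rw [inner_sub_right, inner_smul_right, real_inner_self_eq_norm_sq, h.unit]; ring
  · intro t h0 hn
    rw [inner_sub_right, inner_smul_right]
    have h1 : ⟪V t, V 0⟫ < 1 := inner_lt_one_iff_real_of_norm_eq_one (h.unit t) (h.unit 0) |>.2 (h.ne0 h0 hn)
    have := h.pos 0
    have := hmin t
    nlinarith

def TrapInv (V : ℕ → E3) (z : E3) (t : ℕ) (U : Set E3) : Prop :=
  IsOpen U ∧
  (∀ x ∈ frontier U, ⟪x, z⟫ = 0 ∨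
    (∃ j ≤ t, ∃ α β : ℝ, 0 ≤ α ∧ 0 ≤ β ∧ x = α • V j + β • V (j + 1)) ∨
    (∃ α β : ℝ, x = α • V t + β • V (t + 1) ∧ α ≤ 0 ∧ 0 ≤ β)) ∧
  (∀ x ∈ U, ∀ j ≤ t, 0 < det3 (V j) (V (j + 1)) x) ∧
  (∀ᶠ x in nhds (V (t + 1)), 0 < det3 (V t) (V (t + 1)) x → x ∈ U)

lemma front_det {a b x : E3} (hx : x ∈ frontier {x : E3 | 0 < det3 a b x}) : det3 a b x = 0 :=
  (frontier_lt_subset_eq continuous_const (cont_det3 a b) hx).symm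

lemma clos_det {a b x : E3} {U : Set E3} (hU : ∀ x ∈ U, 0 < det3 a b x) (hx : x ∈ closure U) :
    0 ≤ det3 a b x :=
  closure_minimal (s := U) (t := {x | 0 ≤ det3 a b x}) (fun y hy => (hU y hy).le)
    (isClosed_le continuous_const (cont_det3 a b)) hx

lemma inv_base {n : ℕ} (hn : 3 ≤ n) {u z : E3} {V : ℕ → E3} (h : NP n u V) (hz0 : ⟪V 0, z⟫ = 0)
    (hz : ∀ t, 0 < t → t < n → 0 < ⟪V t, z⟫) : ∃ U, TrapInv V z 0 U := by
  have hc : Continuous (fun x : E3 => ⟪x, z⟫) := by fun_prop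
  have o1 : IsOpen {x : E3 | 0 < ⟪x, z⟫} := isOpen_lt continuous_const hc
  have o2 : IsOpen {x : E3 | 0 < det3 (V 0) (V 1) x} := isOpen_lt continuous_const (cont_det3 _ _)
  refine ⟨{x | 0 < ⟪x, z⟫} ∩ {x | 0 < det3 (V 0) (V 1) x}, o1.inter o2, ?_, ?_, ?_⟩
  · intro x hx
    rcases frontier_inter_subset _ _ hx with ⟨h1, _⟩ | ⟨h1, h2⟩
    · left; exact (frontier_lt_subset_eq continuous_const hc h1).symm
    · right
      have e := front_det h2
      have p : 0 ≤ ⟪x, z⟫ := closure_lt_subset_le continuous_const hc h1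
      obtain ⟨α, β, rfl⟩ := span_of_det_zero (h.turn 0) e
      have hβ : 0 ≤ β := by
        rw [inner_add_left, inner_smul_left, inner_smul_left, hz0] at p
        simp at p
        have := hz 1 (by omega) (by omega)
        exact nonneg_of_mul_nonneg_left p this
      rcases le_total 0 α with hα | hα
      · left; exact ⟨0, le_rfl, α, β, hα, hβ, rfl⟩
      · right; exact ⟨α, β, rfl, hα, hβ⟩
  · rintro x ⟨_, h2⟩ j hj
    obtain rfl : j = 0 := by omega
    exact h2
  · have : ∀ᶠ x in nhds (V (0 + 1)), 0 < ⟪x, z⟫ := o1.mem_nhds (hz 1 (by omega) (by omega))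
    filter_upwards [this] with x hx h2
    exact ⟨hx, h2⟩

lemma trap {U : Set E3} (hU : IsOpen U) {a b d : E3}
    (hN : ∀ᶠ x in nhds b, 0 < det3 a b x → x ∈ U) (hd : 0 < det3 a b d)
    (hf : ∀ s : ℝ, 0 < s → s ≤ 1 → (1 - s) • b + s • d ∉ frontier U) : d ∈ U := by
  let f : ℝ → E3 := fun s => (1 - s) • b + s • d
  have fc : Continuous f := by fun_prop
  have hpre : IsPreconnected (f '' Set.Ioc 0 1) := isPreconnected_Ioc.image f fc.continuousOn
  have hdisj : Disjoint (f '' Set.Ioc 0 1) (frontier U) := by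
    rw [Set.disjoint_left]; rintro _ ⟨s, hs, rfl⟩; exact hf s hs.1 hs.2
  have ev : ∀ᶠ s in nhds (0:ℝ), 0 < det3 a b (f s) → f s ∈ U := by
    have : Filter.Tendsto f (nhds 0) (nhds b) := by
      have := fc.tendsto 0; simpa [f] using this
    exact this.eventually hN
  have hne : ((f '' Set.Ioc 0 1) ∩ U).Nonempty := by
    obtain ⟨ε, hε, hb⟩ := Metric.eventually_nhds_iff.1 ev
    let s := min (ε / 2) 1
    have hs : 0 < s := by positivity
    have hs1 : s ≤ 1 := min_le_right _ _
    have hs2 : s < ε := lt_of_le_of_lt (min_le_left _ _) (by linarith)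
    refine ⟨f s, ⟨s, ⟨hs, hs1⟩, rfl⟩, hb ?_ ?_⟩
    · rw [Real.dist_eq, sub_zero, abs_of_pos hs]; exact hs2
    · simp only [f]; rw [det3_lin, det3_abb]; nlinarith
  have hsub : f '' Set.Ioc 0 1 ⊆ U := by
    refine hpre.subset_of_closure_inter_subset hU hne ?_
    rintro y ⟨hy1, hy2⟩
    by_contra hy
    exact Set.disjoint_left.1 hdisj hy2 (hU.frontier_eq ▸ ⟨hy1, hy⟩)
  have : f 1 ∈ U := hsub ⟨1, ⟨by norm_num, le_rfl⟩, rfl⟩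
  simpa [f] using this

lemma avoid {n : ℕ} (_hn : 3 ≤ n) {u z : E3} {V : ℕ → E3} (h : NP n u V) (hz0 : ⟪V 0, z⟫ = 0)
    (hz : ∀ t, 0 < t → t < n → 0 < ⟪V t, z⟫) {t : ℕ} {U : Set E3} (hI : TrapInv V z t U)
    (ht : t + 2 ≤ n) {s : ℝ} (hs : 0 < s) (hs1 : s ≤ 1) (hs' : t + 2 = n → s < 1) :
    (1 - s) • V (t + 1) + s • V (t + 2) ∉ frontier U := by
  intro hx
  have pn : V n = V 0 := by simpa using h.per 0
  set x := (1 - s) • V (t + 1) + s • V (t + 2) with hxd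
  have b0 := hz (t + 1) (by omega) (by omega)
  have xl : 0 < ⟪x, z⟫ := by
    rw [hxd, inner_add_left, inner_smul_left, inner_smul_left]
    simp only [conj_trivial]
    by_cases e : t + 2 = n
    · have := hs' e
      rw [e, pn, hz0]; nlinarith
    · have := hz (t + 2) (by omega) (by omega)
      nlinarith
  have xu : x ≠ 0 := by intro e; rw [e, inner_zero_left] at xl; exact lt_irrefl _ xl
  have xd : 0 < det3 (V t) (V (t + 1)) x := by
    rw [hxd, det3_lin, det3_abb]; have := h.turn t; nlinarith
  rcases hI.2.1 x hx with h1 | ⟨j, hj, α, β, hα, hβ, e⟩ | ⟨α, β, e, _, _⟩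
  · linarith
  · by_cases hjt : j = t
    · subst hjt
      rw [e, det3_lin, det3_abb, det3_aba] at xd; simp at xd
    · have m1 := mem_arc hα hβ e xu
      have m2 := mem_arc (by linarith) hs.le hxd xu
      by_cases hl : t + 1 + 2 ≤ j + n
      · exact Set.disjoint_left.1 (h.disj j (t + 1) (by omega) hl) m1 m2
      · obtain rfl : j = 0 := by omega
        have e2 : t + 2 = n := by omega
        have ad := h.adj (t + 1)
        have p1 : V (t + 1 + 1) = V 0 := by rw [show t + 1 + 1 = n by omega, pn]
        have p2 : V (t + 1 + 2) = V (0 + 1) := by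
          rw [show t + 1 + 2 = 1 + n by omega, h.per]
        rw [p1, p2] at ad
        have p3 : V (t + 2) = V 0 := p1
        rw [p3] at m2
        have : ‖x‖⁻¹ • x ∈ ({V 0} : Set E3) := ad ▸ ⟨m2, m1⟩
        rw [Set.mem_singleton_iff] at this
        rw [← this, inner_smul_left] at hz0
        simp only [conj_trivial] at hz0
        have : 0 < ‖x‖⁻¹ := by positivity
        nlinarith [mul_pos this xl]
  · rw [e, det3_lin, det3_abb, det3_aba] at xd; simp at xd

lemma inv_step {n : ℕ} (hn : 3 ≤ n) {u z : E3} {V : ℕ → E3} (h : NP n u V) (hz0 : ⟪V 0, z⟫ = 0)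
    (hz : ∀ t, 0 < t → t < n → 0 < ⟪V t, z⟫) {t : ℕ} {U : Set E3} (hI : TrapInv V z t U)
    (ht : t + 2 < n) : V (t + 2) ∈ U ∧ ∃ U', TrapInv V z (t + 1) U' := by
  have hc : V (t + 2) ∈ U := trap hI.1 hI.2.2.2 (h.turn t)
    (fun s h1 h2 => avoid hn h hz0 hz hI (by omega) h1 h2 (by omega))
  refine ⟨hc, U ∩ {x | 0 < det3 (V (t + 1)) (V (t + 2)) x}, ?_, ?_, ?_, ?_⟩
  · exact hI.1.inter (isOpen_lt continuous_const (cont_det3 _ _))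
  · intro x hx
    rcases frontier_inter_subset _ _ hx with ⟨h1, h2⟩ | ⟨h1, h2⟩
    · have e2 := clos_det (U := {x | 0 < det3 (V (t + 1)) (V (t + 2)) x}) (fun _ h => h) h2
      rcases hI.2.1 x h1 with h3 | ⟨j, hj, α, β, hα, hβ, e⟩ | ⟨α, β, e, hα, hβ⟩
      · exact Or.inl h3
      · exact Or.inr (Or.inl ⟨j, by omega, α, β, hα, hβ, e⟩)
      · right; left
        rw [e, det3_lin, det3_aba, ← det3_cyc] at e2
        have := h.turn t
        have hα0 : α = 0 := by nlinarith
        refine ⟨t, by omega, α, β, hα0.ge, hβ, e⟩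
    · right
      obtain ⟨α, β, e⟩ := span_of_det_zero (h.turn (t + 1)) (front_det h2)
      have e2 := clos_det (fun x hx => hI.2.2.1 x hx t le_rfl) h1
      rw [e, det3_lin, det3_abb] at e2
      have hβ : 0 ≤ β := by
        have := h.turn t
        simp only [mul_zero, zero_add] at e2
        exact nonneg_of_mul_nonneg_left e2 this
      rcases le_total 0 α with hα | hα
      · left; exact ⟨t + 1, le_rfl, α, β, hα, hβ, e⟩
      · right; exact ⟨α, β, e, hα, hβ⟩
  · rintro x ⟨h1, h2⟩ j hj
    by_cases e : j = t + 1
    · subst e; exact h2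
    · exact hI.2.2.1 x h1 j (by omega)
  · have : ∀ᶠ x in nhds (V (t + 1 + 1)), x ∈ U := hI.1.mem_nhds hc
    filter_upwards [this] with x hx h2
    exact ⟨hx, h2⟩

lemma inv_all {n : ℕ} (hn : 3 ≤ n) {u z : E3} {V : ℕ → E3} (h : NP n u V) (hz0 : ⟪V 0, z⟫ = 0)
    (hz : ∀ t, 0 < t → t < n → 0 < ⟪V t, z⟫) (t : ℕ) (ht : t + 2 ≤ n) : ∃ U, TrapInv V z t U := by
  induction t with
  | zero => exact inv_base hn h hz0 hz
  | succ t ih =>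
    obtain ⟨U, hU⟩ := ih (by omega)
    exact (inv_step hn h hz0 hz hU (by omega)).2

lemma left_later {n : ℕ} (hn : 3 ≤ n) {u z : E3} {V : ℕ → E3} (h : NP n u V) (hz0 : ⟪V 0, z⟫ = 0)
    (hz : ∀ t, 0 < t → t < n → 0 < ⟪V t, z⟫) (j t : ℕ) (hj : j + 2 ≤ t) (ht : t < n) :
    0 < det3 (V j) (V (j + 1)) (V t) := by
  obtain ⟨t, rfl⟩ : ∃ s, t = s + 2 := ⟨t - 2, by omega⟩
  obtain ⟨U, hU⟩ := inv_all hn h hz0 hz t (by omega)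
  exact hU.2.2.1 _ (inv_step hn h hz0 hz hU ht).1 j (by omega)

lemma left_zero {n : ℕ} (hn : 3 ≤ n) {u z : E3} {V : ℕ → E3} (h : NP n u V) (hz0 : ⟪V 0, z⟫ = 0)
    (hz : ∀ t, 0 < t → t < n → 0 < ⟪V t, z⟫) (j : ℕ) (hj : j + 2 ≤ n) :
    0 ≤ det3 (V j) (V (j + 1)) (V 0) := by
  obtain ⟨t, rfl⟩ : ∃ s, n = s + 2 := ⟨n - 2, by omega⟩
  obtain ⟨U, hU⟩ := inv_all hn h hz0 hz t (by omega)
  have pn : V (t + 2) = V 0 := by simpa using h.per 0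
  have key : ∀ r : ℝ, 0 < r → r < 1 → (1 - r) • V (t + 1) + r • V (t + 2) ∈ U := by
    intro r hr hr1
    refine trap hU.1 hU.2.2.2 ?_ ?_
    · rw [det3_lin, det3_abb]; have := h.turn t; nlinarith
    · intro s hs hs1
      have := avoid hn h hz0 hz hU le_rfl (s := s * r) (by positivity) (by nlinarith) (fun _ => by nlinarith)
      have e : (1 - s) • V (t + 1) + s • ((1 - r) • V (t + 1) + r • V (t + 2)) =
          (1 - s * r) • V (t + 1) + (s * r) • V (t + 2) := by module
      rw [e]; exact this
  have : V (t + 2) ∈ closure U := by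
    have fc : Continuous (fun r : ℝ => (1 - r) • V (t + 1) + r • V (t + 2)) := by fun_prop
    have hm : (1:ℝ) ∈ closure (Set.Ioo (0:ℝ) 1) := by
      rw [closure_Ioo (by norm_num)]; simp
    have := map_mem_closure fc hm (t := U) (fun r hr => key r hr.1 hr.2)
    simpa using this
  rw [← pn]
  exact clos_det (fun x hx => hU.2.2.1 x hx j (by omega)) this

lemma tri_core {n : ℕ} (hn : 3 ≤ n) {u : E3} {V : ℕ → E3} (h : NP n u V)
    (hmin : ∀ t, ⟪V 0, u⟫ ≤ ⟪V t, u⟫) (i j k : ℕ) (hij : i < j) (hjk : j < k) (hk : k < n) :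
    0 < det3 (V i) (V j) (V k) := by
  obtain ⟨z, hz0, hz⟩ := h.ell hmin
  have LL := left_later hn h hz0 hz
  have LZ := left_zero hn h hz0 hz
  have pn : V n = V 0 := by simpa using h.per 0
  have wk : ∀ i, 1 ≤ i → ∀ j, i < j → j < n → 0 ≤ det3 (V 0) (V i) (V j) := by
    intro i hi j hj
    induction j, hj using Nat.le_induction with
    | base => intro hn'; rw [det3_cyc]; exact LZ i (by omega)
    | succ j hj ih =>
      intro hn'
      have ih := ih (by omega)
      have r := lin_rel z (V 0) (V i) (V j) (V (j + 1))
      have g : 0 ≤ det3 (V 0) (V j) (V (j + 1)) := by rw [det3_cyc]; exact LZ j (by omega)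
      have l1 := hz i (by omega) (by omega)
      have l2 := hz j (by omega) (by omega)
      have l3 := hz (j + 1) (by omega) (by omega)
      rw [hz0, zero_mul] at r
      have : 0 ≤ ⟪V j, z⟫ * det3 (V 0) (V i) (V (j + 1)) := by
        have := mul_nonneg l1.le g
        have := mul_nonneg l3.le ih
        linarith
      exact nonneg_of_mul_nonneg_right this l2
  have sg : ∀ i, 1 ≤ i → i + 1 < n → 0 < det3 (V 0) (V i) (V (i + 1)) := by
    intro i hi hin
    by_cases h1 : i = 1
    · subst h1; exact LL 0 2 (by omega) (by omega)
    by_cases h2 : i + 2 = n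
    · have := h.turn i
      rw [h2, pn, ← det3_cyc] at this; exact this
    refine lt_of_le_of_ne (wk i hi _ (by omega) hin) (fun e => ?_)
    have d1 : 0 < det3 (V i) (V 0) (V 1) := by
      rw [det3_cyc]; exact LL 0 i (by omega) (by omega)
    have d2 : det3 (V i) (V 0) (V (i + 1)) = 0 := by
      have : det3 (V i) (V 0) (V (i + 1)) = - det3 (V 0) (V i) (V (i + 1)) := by
        simp only [det3]; ring
      rw [this, ← e, neg_zero]
    obtain ⟨α, β, e3⟩ := span_of_det_zero d1 d2
    have t1 := LL i (n - 1) (by omega) (by omega)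
    have w1 := wk i hi (n - 1) (by omega) (by omega)
    obtain ⟨i', rfl⟩ : ∃ q, i = q + 1 := ⟨i - 1, by omega⟩
    have t2 := h.turn i'
    have w2 := wk i' (by omega) (i' + 1) (by omega) (by omega)
    rw [show i' + 2 = i' + 1 + 1 by omega, e3, det3_lin, det3_abb, ← det3_cyc] at t2
    rw [← det3_cyc, e3, det3_lin] at t1
    rw [det3_cyc, det3_cyc] at w1
    have q1 : det3 (V (n - 1)) (V (i' + 1)) (V (i' + 1)) = 0 := det3_abb _ _
    have q2 : det3 (V (n - 1)) (V (i' + 1)) (V 0) = - det3 (V (n - 1)) (V 0) (V (i' + 1)) := by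
      simp only [det3]; ring
    rw [q1, q2] at t1
    have b1 : β < 0 := by by_contra hb; push Not at hb; nlinarith [mul_nonneg hb w1]
    nlinarith [mul_nonneg (neg_pos.2 b1).le w2]
  have st : ∀ i, 1 ≤ i → ∀ j, i < j → j < n → 0 < det3 (V 0) (V i) (V j) := by
    intro i hi j hj
    induction j, hj using Nat.le_induction with
    | base => intro hn'; exact sg i hi hn'
    | succ j hj ih =>
      intro hn'
      have ih := ih (by omega)
      have r := lin_rel z (V 0) (V i) (V j) (V (j + 1))
      have g := sg j (by omega) hn'
      have l1 := hz i (by omega) (by omega)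
      have l2 := hz j (by omega) (by omega)
      have l3 := hz (j + 1) (by omega) (by omega)
      rw [hz0, zero_mul] at r
      have : 0 < ⟪V j, z⟫ * det3 (V 0) (V i) (V (j + 1)) := by
        have := mul_pos l1 g
        have := mul_pos l3 ih
        linarith
      exact pos_of_mul_pos_right this l2.le
  by_cases hi : i = 0
  · subst hi; exact st j (by omega) k hjk hk
  have fin : ∀ j, i < j → j < k → 0 < det3 (V i) (V j) (V k) := by
    intro j hj
    induction j, hj using Nat.le_induction with
    | base => intro hn'; exact LL i k (by omega) hk
    | succ j hj ih =>
      intro hn'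
      have ih := ih (by omega)
      have r := plu (V 0) (V k) (V i) (V j) (V (j + 1))
      have g := LL j k (by omega) hk
      have l1 := st i (by omega) k (by omega) hk
      have l2 := st j (by omega) k (by omega) hk
      have l3 := st (j + 1) (by omega) k (by omega) hk
      have : 0 < det3 (V 0) (V j) (V k) * det3 (V i) (V (j + 1)) (V k) := by
        have := mul_pos l1 g
        have := mul_pos l3 ih
        linarith
      exact pos_of_mul_pos_right this l2.le
  exact fin j hij hjk

lemma dual_core {n : ℕ} (hn : 3 ≤ n) {u : E3} {V : ℕ → E3} (h : NP n u V)
    (hmin : ∀ t, ⟪V 0, u⟫ ≤ ⟪V t, u⟫) (a b c : ℕ) (hab : a < b) (hbc : b < c) (hc : c < n) :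
    0 < det3 (cr (V a) (V (a + 1))) (cr (V b) (V (b + 1))) (cr (V c) (V (c + 1))) := by
  have T := tri_core hn h hmin
  have pn : V n = V 0 := by simpa using h.per 0
  have id := dual_identity (V a) (V (a + 1)) (V b) (V (b + 1)) (V c) (V (c + 1))
  have h0 := T a b c hab hbc hc
  have h1 := T a b (b + 1) hab (by omega) (by omega)
  have h2 : 0 < det3 (V b) (V c) (V (c + 1)) := by
    by_cases e : c + 1 = n
    · rw [e, pn, ← det3_cyc]; exact T 0 b c (by omega) hbc hc
    · exact T b c (c + 1) hbc (by omega) (by omega)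
  have h3 := T a (a + 1) c (by omega) (by omega) hc
  have h4 : 0 ≤ det3 (V a) (V c) (V (c + 1)) := by
    by_cases e : c + 1 = n
    · rw [e, pn, ← det3_cyc]
      by_cases e' : a = 0
      · rw [e', det3_aab]
      · exact (T 0 a c (by omega) (by omega) hc).le
    · exact (T a c (c + 1) (by omega) (by omega) (by omega)).le
  have h5 : 0 ≤ det3 (V b) (V (b + 1)) (V c) := by
    by_cases e : b + 1 = c
    · rw [e, det3_abb]
    · exact (T b (b + 1) c (by omega) (by omega) hc).le
  have h6 : 0 ≤ det3 (V a) (V (a + 1)) (V b) := by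
    by_cases e : a + 1 = b
    · rw [e, det3_abb]
    · exact (T a (a + 1) b (by omega) (by omega) (by omega)).le
  have : 0 < det3 (V a) (V b) (V c) *
      det3 (cr (V a) (V (a + 1))) (cr (V b) (V (b + 1))) (cr (V c) (V (c + 1))) := by
    rw [id]; positivity
  exact pos_of_mul_pos_right this h0.le

lemma NP.perm {n : ℕ} {u : E3} {V : ℕ → E3} (h : NP n u V) (t q : ℕ) : V (t + n * q) = V t := by
  induction q with
  | zero => simp
  | succ q ih => rw [Nat.mul_succ, ← add_assoc, h.per, ih]

lemma dual_all {n : ℕ} (hn : 3 ≤ n) {u : E3} {V : ℕ → E3} (h : NP n u V)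
    (a b c : ℕ) (hab : a < b) (hbc : b < c) (hc : c < a + n) :
    0 < det3 (cr (V a) (V (a + 1))) (cr (V b) (V (b + 1))) (cr (V c) (V (c + 1))) := by
  obtain ⟨k0, hk0, hk⟩ := Finset.exists_min_image (Finset.range n) (fun t => ⟪V t, u⟫)
    ⟨0, by simp; omega⟩
  have hk0n : k0 < n := by simpa using hk0
  have hmin0 : ∀ t, ⟪V k0, u⟫ ≤ ⟪V t, u⟫ := by
    intro t
    have := hk (t % n) (by simpa using Nat.mod_lt _ (by omega))
    have e := h.perm (t % n) (t / n)
    rw [Nat.mod_add_div] at e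
    rw [e]; exact this
  let q := (a + n - k0) / n
  have hq1 : n * q ≤ a + n - k0 := Nat.mul_div_le _ _
  have hq2 : a + n - k0 < n * q + n := by
    have := Nat.lt_mul_div_succ (a + n - k0) (show 0 < n by omega)
    rw [Nat.mul_add, mul_one] at this; exact this
  obtain ⟨k, hkd⟩ : ∃ k, k = k0 + n * q := ⟨_, rfl⟩
  have k1 : k ≤ a + n := by omega
  have k2 : a + n < k + n := by omega
  have hmin : ∀ t, ⟪V (k + 0), u⟫ ≤ ⟪V (k + t), u⟫ := by
    intro t; rw [add_zero, hkd, h.perm]; exact hmin0 _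
  let N : ℕ → E3 := fun t => cr (V t) (V (t + 1))
  have Nper : ∀ t, N (t + n) = N t := by
    intro t; simp only [N]; rw [h.per, show t + n + 1 = t + 1 + n by omega, h.per]
  have core : ∀ x y w, k ≤ x → x < y → y < w → w < k + n → 0 < det3 (N x) (N y) (N w) := by
    intro x y w hx hxy hyw hw
    have := dual_core hn (h.shift k) hmin (x - k) (y - k) (w - k) (by omega) (by omega) (by omega)
    simp only [← add_assoc] at this
    rw [show k + (x - k) = x by omega, show k + (y - k) = y by omega,
      show k + (w - k) = w by omega] at this
    exact this
  change 0 < det3 (N a) (N b) (N c)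
  by_cases c1 : c + n < k + n
  · rw [← Nper a, ← Nper b, ← Nper c]
    exact core _ _ _ (by omega) (by omega) (by omega) (by omega)
  by_cases c2 : b + n < k + n
  · rw [← Nper a, ← Nper b, ← det3_cyc]
    exact core _ _ _ (by omega) (by omega) (by omega) (by omega)
  · rw [← Nper a, det3_cyc]
    exact core _ _ _ (by omega) (by omega) (by omega) (by omega)

/-- unit normals -/
def nn (V : ℕ → E3) (t : ℕ) : E3 := ‖cr (V t) (V (t + 1))‖⁻¹ • cr (V t) (V (t + 1))

lemma det3_eq_inner (a b c : E3) : det3 a b c = ⟪cr a b, c⟫ := by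
  simp only [inn, det3, cr0, cr1, cr2]; ring

lemma cr_norm_pos {a b c : E3} (h : 0 < det3 a b c) : 0 < ‖cr a b‖ := by
  rw [norm_pos_iff]; intro e; rw [det3_eq_inner, e, inner_zero_left] at h; exact lt_irrefl _ h

lemma NP.cpos {n : ℕ} {u : E3} {V : ℕ → E3} (h : NP n u V) (t : ℕ) :
    0 < ‖cr (V t) (V (t + 1))‖ := cr_norm_pos (h.turn t)

lemma NP.nn_unit {n : ℕ} {u : E3} {V : ℕ → E3} (h : NP n u V) (t : ℕ) : ⟪nn V t, nn V t⟫ = 1 := by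
  have := h.cpos t
  rw [nn, real_inner_self_eq_norm_sq, norm_smul, norm_inv, norm_norm, inv_mul_cancel₀ this.ne', one_pow]

lemma NP.v_unit {n : ℕ} {u : E3} {V : ℕ → E3} (h : NP n u V) (t : ℕ) : ⟪V t, V t⟫ = 1 := by
  rw [real_inner_self_eq_norm_sq, h.unit, one_pow]

lemma nn_orth_left (V : ℕ → E3) (t : ℕ) : ⟪nn V t, V t⟫ = 0 := by
  rw [nn, inner_smul_left, ← det3_eq_inner, det3_aba, mul_zero]

lemma nn_orth_right (V : ℕ → E3) (t : ℕ) : ⟪nn V t, V (t + 1)⟫ = 0 := by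
  rw [nn, inner_smul_left, ← det3_eq_inner, det3_abb, mul_zero]

def Rot (R : E3 ≃ₗᵢ[ℝ] E3) : Prop := ∀ x y z, det3 (R x) (R y) (R z) = det3 x y z

lemma turn_lem {R : E3 ≃ₗᵢ[ℝ] E3} (hR : Rot R) {p q z p' q' z' : E3} (hp : R p = p') (hq : R q = q')
    (h1 : ⟪p, z⟫ = ⟪p', z'⟫) (h2 : ⟪q, z⟫ = ⟪q', z'⟫) (h3 : ⟪z, z⟫ = ⟪z', z'⟫)
    (d : 0 < det3 p q z) (d' : 0 < det3 p' q' z') : R z = z' := by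
  subst hp hq
  refine uni (p := R p) (q := R q) (by rw [hR]; exact d) d' ?_ ?_ ?_
  · rw [R.inner_map_map, h1]
  · rw [R.inner_map_map, h2]
  · rw [R.inner_map_map, h3]

lemma frame_orth {p q : E3} (hp : ⟪p, p⟫ = 1) (hq : ⟪q, q⟫ = 1) (hpq : ⟪p, q⟫ = 0) :
    Orthonormal ℝ ![p, q, cr p q] := by
  have e1 : ⟪p, cr p q⟫ = 0 := by rw [real_inner_comm, ← det3_eq_inner, det3_aba]
  have e2 : ⟪q, cr p q⟫ = 0 := by rw [real_inner_comm, ← det3_eq_inner, det3_abb]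
  have e3 : ⟪cr p q, cr p q⟫ = 1 := by
    have : ⟪cr p q, cr p q⟫ = ⟪p, p⟫ * ⟪q, q⟫ - ⟪p, q⟫ ^ 2 := by
      simp only [inn, cr0, cr1, cr2]; ring
    rw [this, hp, hq, hpq]; norm_num
  have sq : ∀ x : E3, ⟪x, x⟫ = 1 → ‖x‖ = 1 := by
    intro x hx; rw [real_inner_self_eq_norm_sq] at hx
    exact (pow_eq_one_iff_of_nonneg (norm_nonneg _) two_ne_zero).1 hx
  have n1 := sq _ hp
  have n2 := sq _ hq
  have n3 := sq _ e3
  have e1' := real_inner_comm p (cr p q)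
  have e2' := real_inner_comm q (cr p q)
  have e3' := real_inner_comm p q
  rw [e1] at e1'
  rw [e2] at e2'
  rw [hpq] at e3'
  rw [orthonormal_iff_ite]
  intro i j
  fin_cases i <;> fin_cases j <;> simp [n1, n2, n3, hpq, e1, e2, e1', e2', e3']

lemma frame_det {p q : E3} (hp : ⟪p, p⟫ = 1) (hq : ⟪q, q⟫ = 1) (hpq : ⟪p, q⟫ = 0) :
    det3 p q (cr p q) = 1 := by
  have : det3 p q (cr p q) = ⟪p, p⟫ * ⟪q, q⟫ - ⟪p, q⟫ ^ 2 := by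
    simp only [det3, inn, cr0, cr1, cr2]; ring
  rw [this, hp, hq, hpq]; norm_num

lemma det3_comb (p q r : E3) (a b c : Fin 3 → ℝ) :
    det3 (a 0 • p + a 1 • q + a 2 • r) (b 0 • p + b 1 • q + b 2 • r) (c 0 • p + c 1 • q + c 2 • r) =
    (a 0 * (b 1 * c 2 - b 2 * c 1) - a 1 * (b 0 * c 2 - b 2 * c 0) +
    a 2 * (b 0 * c 1 - b 1 * c 0)) * det3 p q r := by
  simp only [det3, PiLp.add_apply, PiLp.smul_apply, smul_eq_mul]; ring

lemma exists_rot {p q p' q' : E3} (hp : ⟪p, p⟫ = 1) (hq : ⟪q, q⟫ = 1) (hpq : ⟪p, q⟫ = 0)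
    (hp' : ⟪p', p'⟫ = 1) (hq' : ⟪q', q'⟫ = 1) (hpq' : ⟪p', q'⟫ = 0) :
    ∃ R : E3 ≃ₗᵢ[ℝ] E3, Rot R ∧ R p = p' ∧ R q = q' := by
  have mk : ∀ p q : E3, ⟪p, p⟫ = 1 → ⟪q, q⟫ = 1 → ⟪p, q⟫ = 0 →
      ∃ b : OrthonormalBasis (Fin 3) ℝ E3, b 0 = p ∧ b 1 = q ∧ b 2 = cr p q := by
    intro p q h1 h2 h3
    have ho := frame_orth h1 h2 h3
    have hb := coe_basisOfOrthonormalOfCardEqFinrank ho (by simp)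
    refine ⟨(basisOfOrthonormalOfCardEqFinrank ho (by simp)).toOrthonormalBasis (by rw [hb]; exact ho), ?_, ?_, ?_⟩ <;>
      simp
  obtain ⟨b, b0, b1, b2⟩ := mk p q hp hq hpq
  obtain ⟨c, c0, c1, c2⟩ := mk p' q' hp' hq' hpq'
  have eb : ∀ i, (b.equiv c (Equiv.refl _)) (b i) = c i := by intro i; simp
  refine ⟨b.equiv c (Equiv.refl _), ?_, ?_, ?_⟩
  · intro x y z
    have ex : ∀ x : E3, x = ⟪b 0, x⟫ • b 0 + ⟪b 1, x⟫ • b 1 + ⟪b 2, x⟫ • b 2 := by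
      intro x; have := b.sum_repr' x; rw [Fin.sum_univ_three] at this; exact this.symm
    have eR : ∀ x : E3, b.equiv c (Equiv.refl _) x = ⟪b 0, x⟫ • c 0 + ⟪b 1, x⟫ • c 1 + ⟪b 2, x⟫ • c 2 := by
      intro x
      conv_lhs => rw [ex x]
      simp only [map_add, map_smul, eb]
    have k1 := det3_comb (c 0) (c 1) (c 2) (fun i => ⟪b i, x⟫) (fun i => ⟪b i, y⟫) (fun i => ⟪b i, z⟫)
    have k2 := det3_comb (b 0) (b 1) (b 2) (fun i => ⟪b i, x⟫) (fun i => ⟪b i, y⟫) (fun i => ⟪b i, z⟫)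
    simp only [← ex, ← eR] at k1 k2
    have d1 : det3 (c 0) (c 1) (c 2) = 1 := by rw [c0, c1, c2]; exact frame_det hp' hq' hpq'
    have d2 : det3 (b 0) (b 1) (b 2) = 1 := by rw [b0, b1, b2]; exact frame_det hp hq hpq
    rw [k1, k2, d1, d2]
  · rw [← b0, eb, c0]
  · rw [← b1, eb, c1]

lemma NP.d1 {n : ℕ} {u : E3} {V : ℕ → E3} (h : NP n u V) (t : ℕ) :
    0 < det3 (V (t + 1)) (nn V t) (nn V (t + 1)) := by
  have e : det3 (V (t + 1)) (nn V t) (nn V (t + 1)) =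
      ‖cr (V t) (V (t + 1))‖⁻¹ * ‖cr (V (t + 1)) (V (t + 1 + 1))‖⁻¹ *
        (⟪V (t + 1), V (t + 1)⟫ * det3 (V t) (V (t + 1)) (V (t + 2))) := by
    simp only [nn, det3, inn, cr0, cr1, cr2, PiLp.smul_apply, smul_eq_mul]; ring
  rw [e, h.v_unit, one_mul]
  have := h.cpos t
  have := h.cpos (t + 1)
  have := h.turn t
  positivity

lemma NP.d2 {n : ℕ} {u : E3} {V : ℕ → E3} (h : NP n u V) (t : ℕ) :
    0 < det3 (nn V t) (V t) (V (t + 1)) := by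
  have e : det3 (nn V t) (V t) (V (t + 1)) =
      ‖cr (V t) (V (t + 1))‖⁻¹ * ⟪cr (V t) (V (t + 1)), cr (V t) (V (t + 1))⟫ := by
    simp only [nn, det3, inn, cr0, cr1, cr2, PiLp.smul_apply, smul_eq_mul]; ring
  rw [e, real_inner_self_eq_norm_sq]
  have := h.cpos t
  positivity

lemma NP.d3 {n : ℕ} (hn : 3 ≤ n) {u : E3} {V : ℕ → E3} (h : NP n u V) (a b c : ℕ) (hab : a < b) (hbc : b < c)
    (hc : c < a + n) : 0 < det3 (nn V a) (nn V b) (nn V c) := by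
  unfold nn
  rw [det3_smul3]
  have := h.cpos a
  have := h.cpos b
  have := h.cpos c
  have := dual_all hn h a b c hab hbc hc
  positivity

lemma chain {n : ℕ} {u u' : E3} {V W : ℕ → E3} (h : NP n u V) (h' : NP n u' W)
    (hA : ∀ t, ⟪nn V t, nn V (t + 1)⟫ = ⟪nn W t, nn W (t + 1)⟫) (a b : ℕ)
    (hL : ∀ j, a < j → j < b → ⟪V j, V (j + 1)⟫ = ⟪W j, W (j + 1)⟫) :
    ∃ R : E3 ≃ₗᵢ[ℝ] E3, Rot R ∧ ∀ j, a ≤ j → j ≤ b → R (nn V j) = nn W j := by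
  obtain ⟨R, hR, r1, r2⟩ := exists_rot (h.v_unit (a + 1)) (h.nn_unit a)
    (by rw [real_inner_comm]; exact nn_orth_right V a) (h'.v_unit (a + 1)) (h'.nn_unit a)
    (by rw [real_inner_comm]; exact nn_orth_right W a)
  refine ⟨R, hR, ?_⟩
  have stepn : ∀ j, R (V (j + 1)) = W (j + 1) → R (nn V j) = nn W j →
      R (nn V (j + 1)) = nn W (j + 1) := by
    intro j e1 e2
    refine turn_lem hR e1 e2 ?_ (hA j) (by rw [h.nn_unit, h'.nn_unit]) (h.d1 j) (h'.d1 j)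
    rw [real_inner_comm, nn_orth_left, real_inner_comm, nn_orth_left]
  have key : ∀ j, a ≤ j → j ≤ b → R (nn V j) = nn W j ∧ (j < b → R (V (j + 1)) = W (j + 1)) := by
    intro j hj
    induction j, hj using Nat.le_induction with
    | base => intro _; exact ⟨r2, fun _ => r1⟩
    | succ j hj ih =>
      intro hb
      obtain ⟨i1, i2⟩ := ih (by omega)
      have i2 := i2 (by omega)
      have i3 := stepn j i2 i1
      refine ⟨i3, fun hlt => ?_⟩
      refine turn_lem hR i3 i2 ?_ (hL (j + 1) (by omega) hlt) (by rw [h.v_unit, h'.v_unit])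
        (h.d2 _) (h'.d2 _)
      rw [nn_orth_right, nn_orth_right]
  intro j h1 h2
  exact (key j h1 h2).1

lemma congr_nat {n : ℕ} (hn : 3 ≤ n) {u u' : E3} {V W : ℕ → E3} (h : NP n u V) (h' : NP n u' W)
    (hA : ∀ t, ⟪nn V t, nn V (t + 1)⟫ = ⟪nn W t, nn W (t + 1)⟫) (a b c : ℕ)
    (hab : a < b) (hbc : b < c) (hc : c < a + n)
    (hL : ∀ j, a < j → j < a + n → j ≠ b → j ≠ c → ⟪V j, V (j + 1)⟫ = ⟪W j, W (j + 1)⟫) :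
    ∃ R : E3 ≃ₗᵢ[ℝ] E3, ∀ t, R (V t) = W t := by
  have per : ∀ {u V}, NP n u V → ∀ t, nn V (t + n) = nn V t := by
    intro u V h t; unfold nn; rw [h.per, show t + n + 1 = t + 1 + n by omega, h.per]
  obtain ⟨R, hR, r1⟩ := chain h h' hA a b (fun j h1 h2 => hL j h1 (by omega) (by omega) (by omega))
  obtain ⟨R2, _, r2⟩ := chain h h' hA b c (fun j h1 h2 => hL j (by omega) (by omega) (by omega) (by omega))
  obtain ⟨R3, _, r3⟩ := chain h h' hA c (a + n) (fun j h1 h2 => hL j (by omega) (by omega) (by omega) (by omega))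
  have inn2 : ∀ i j, b ≤ i → i ≤ c → b ≤ j → j ≤ c → ⟪nn V i, nn V j⟫ = ⟪nn W i, nn W j⟫ := by
    intro i j _ _ _ _
    rw [← r2 i (by omega) (by omega), ← r2 j (by omega) (by omega), R2.inner_map_map]
  have inn3 : ∀ i j, c ≤ i → i ≤ a + n → c ≤ j → j ≤ a + n → ⟪nn V i, nn V j⟫ = ⟪nn W i, nn W j⟫ := by
    intro i j _ _ _ _
    rw [← r3 i (by omega) (by omega), ← r3 j (by omega) (by omega), R3.inner_map_map]
  have uu : ∀ j, ⟪nn V j, nn V j⟫ = ⟪nn W j, nn W j⟫ := by intro j; rw [h.nn_unit, h'.nn_unit]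
  have ra := r1 a le_rfl hab.le
  have rb := r1 b hab.le le_rfl
  have rc : R (nn V c) = nn W c := by
    refine turn_lem hR ra rb ?_ (inn2 b c (by omega) (by omega) (by omega) (by omega)) (uu c)
      (h.d3 hn a b c hab hbc hc) (h'.d3 hn a b c hab hbc hc)
    rw [← per h a, ← per h' a]
    exact inn3 _ _ (by omega) (by omega) (by omega) (by omega)
  have ran : R (nn V (a + n)) = nn W (a + n) := by rw [per h, per h', ra]
  have base : ∀ j, a ≤ j → j ≤ a + n → R (nn V j) = nn W j := by
    intro j h1 h2
    rcases le_or_gt j b with hb | hb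
    · exact r1 j h1 hb
    rcases lt_trichotomy j c with hj | hj | hj
    · refine turn_lem hR rc rb (inn2 _ _ (by omega) (by omega) (by omega) (by omega))
        (inn2 _ _ (by omega) (by omega) (by omega) (by omega)) (uu j) ?_ ?_
      · rw [det3_cyc]; exact h.d3 hn b j c hb hj (by omega)
      · rw [det3_cyc]; exact h'.d3 hn b j c hb hj (by omega)
    · rw [hj]; exact rc
    rcases h2.eq_or_lt with he | he
    · rw [he]; exact ran
    · refine turn_lem hR ran rc (inn3 _ _ (by omega) (by omega) (by omega) (by omega))
        (inn3 _ _ (by omega) (by omega) (by omega) (by omega)) (uu j) ?_ ?_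
      · rw [det3_cyc]; exact h.d3 hn c j (a + n) hj he (by omega)
      · rw [det3_cyc]; exact h'.d3 hn c j (a + n) hj he (by omega)
  have vb : ∀ j, a ≤ j → j < a + n → R (V (j + 1)) = W (j + 1) := by
    intro j h1 h2
    refine turn_lem hR (base j h1 h2.le) (base (j + 1) (by omega) h2) ?_ ?_
      (by rw [h.v_unit, h'.v_unit]) ?_ ?_
    · rw [nn_orth_right, nn_orth_right]
    · rw [nn_orth_left, nn_orth_left]
    · rw [← det3_cyc]; exact h.d1 j
    · rw [← det3_cyc]; exact h'.d1 j
  refine ⟨R, fun t => ?_⟩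
  -- t ≡ j + 1 with a ≤ j < a + n
  have e1 : ∀ q, a + 1 ≤ t + n * q → t + n * q < a + 1 + n → R (V t) = W t := by
    intro q h1 h2
    rw [← h.perm t q, ← h'.perm t q]
    have := vb (t + n * q - 1) (by omega) (by omega)
    rwa [show t + n * q - 1 + 1 = t + n * q by omega] at this
  have e2 : ∀ q t', t = t' + n * q → a + 1 ≤ t' → t' < a + 1 + n → R (V t) = W t := by
    intro q t' e h1 h2
    rw [e, h.perm, h'.perm]
    have := vb (t' - 1) (by omega) (by omega)
    rwa [show t' - 1 + 1 = t' by omega] at this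
  rcases le_or_gt (a + 1) t with ht | ht
  · refine e2 ((t - (a + 1)) / n) ((t - (a + 1)) % n + (a + 1)) ?_ (by omega) ?_
    · have := Nat.mod_add_div (t - (a + 1)) n; omega
    · have := Nat.mod_lt (t - (a + 1)) (show 0 < n by omega); omega
  · have hm := Nat.mod_add_div (a + n - t) n
    have hl := Nat.mod_lt (a + n - t) (show 0 < n by omega)
    refine e1 ((a + n - t) / n) ?_ ?_ <;> omega

lemma proj_norm {p x : E3} (hx : ⟪x, x⟫ = 1) : ‖p - ⟪p, x⟫ • x‖ = ‖cr p x‖ := by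
  have e : ‖p - ⟪p, x⟫ • x‖ ^ 2 = ‖cr p x‖ ^ 2 := by
    rw [← real_inner_self_eq_norm_sq, ← real_inner_self_eq_norm_sq]
    have h1 : ⟪p - ⟪p, x⟫ • x, p - ⟪p, x⟫ • x⟫ = ⟪p, p⟫ - 2 * ⟪p, x⟫ ^ 2 + ⟪p, x⟫ ^ 2 * ⟪x, x⟫ := by
      simp only [inn, PiLp.sub_apply, PiLp.smul_apply, smul_eq_mul]; ring
    have h2 : ⟪cr p x, cr p x⟫ = ⟪p, p⟫ * ⟪x, x⟫ - ⟪p, x⟫ ^ 2 := by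
      simp only [inn, cr0, cr1, cr2]; ring
    rw [h1, h2, hx]; ring
  exact (pow_left_inj₀ (norm_nonneg _) (norm_nonneg _) two_ne_zero).1 e

lemma cr_anti_norm (x q : E3) : ‖cr q x‖ = ‖cr x q‖ := by
  have : cr q x = - cr x q := by
    apply E3ext <;> simp only [PiLp.neg_apply, cr0, cr1, cr2] <;> ring
  rw [this, norm_neg]

lemma cos_sangle {n : ℕ} {u : E3} {V : ℕ → E3} (h : NP n u V) (t : ℕ) :
    Real.cos (sangle (V t) (V (t + 1)) (V (t + 2))) = - ⟪nn V t, nn V (t + 1)⟫ := by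
  have hx := h.v_unit (t + 1)
  rw [sangle, InnerProductGeometry.cos_angle, proj_norm hx, proj_norm hx, cr_anti_norm (V (t + 1)) (V (t + 2))]
  unfold nn
  rw [inner_smul_left, inner_smul_right]
  have e : ⟪V t - ⟪V t, V (t + 1)⟫ • V (t + 1), V (t + 2) - ⟪V (t + 2), V (t + 1)⟫ • V (t + 1)⟫ =
      - ⟪cr (V t) (V (t + 1)), cr (V (t + 1)) (V (t + 1 + 1))⟫ := by
    have h1 : ⟪V t - ⟪V t, V (t + 1)⟫ • V (t + 1), V (t + 2) - ⟪V (t + 2), V (t + 1)⟫ • V (t + 1)⟫ =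
      ⟪V t, V (t + 2)⟫ - 2 * ⟪V t, V (t + 1)⟫ * ⟪V (t + 2), V (t + 1)⟫ +
        ⟪V t, V (t + 1)⟫ * ⟪V (t + 2), V (t + 1)⟫ * ⟪V (t + 1), V (t + 1)⟫ := by
      simp only [inn, PiLp.sub_apply, PiLp.smul_apply, smul_eq_mul]; ring
    have h2 : ⟪cr (V t) (V (t + 1)), cr (V (t + 1)) (V (t + 1 + 1))⟫ =
      ⟪V t, V (t + 1)⟫ * ⟪V (t + 2), V (t + 1)⟫ - ⟪V t, V (t + 2)⟫ * ⟪V (t + 1), V (t + 1)⟫ := by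
      simp only [inn, cr0, cr1, cr2]; ring
    rw [h1, h2, hx]; ring
  rw [e]
  simp only [conj_trivial, div_eq_mul_inv, mul_inv]
  ring

/-- cyclic index -/
def ph (m t : ℕ) : Fin (m + 3) := Fin.ofNat (m + 3) t

lemma ph1 (m t : ℕ) : ph m (t + 1) = ph m t + 1 := by
  apply Fin.ext; simp [ph, Fin.val_add]
lemma ph2 (m t : ℕ) : ph m (t + 2) = ph m t + 2 := by
  rw [show t + 2 = t + 1 + 1 by omega, ph1, ph1, add_assoc]; congr 1
lemma phn (m t : ℕ) : ph m (t + (m + 3)) = ph m t := by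
  apply Fin.ext; simp [ph]
lemma ph_ne (m : ℕ) {i j : ℕ} (h1 : i < j) (h2 : j < i + (m + 3)) : ph m i ≠ ph m j := by
  intro e
  have := congrArg Fin.val e
  simp only [ph, Fin.val_ofNat] at this
  have d := (Nat.modEq_iff_dvd' h1.le).1 this
  have := Nat.le_of_dvd (by omega) d
  omega
lemma ph_val (m : ℕ) (i : Fin (m + 3)) : ph m i.val = i := by
  apply Fin.ext; simp [ph]

lemma toNP {m : ℕ} {v : Fin (m + 3) → E3} (hv : StrictlyConvexSphPolygon m v) :
    ∃ u, NP (m + 3) u (fun t => v (ph m t)) := by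
  obtain ⟨h1, h2, h3, h4, u, _, h5⟩ := hv
  refine ⟨u, ?_, ?_, ?_, ?_, ?_, ?_⟩
  · intro t; simp only [phn]
  · intro t; exact h1 _
  · intro t
    have := h2 (ph m (t + 1))
    rw [← ph1, ph1 m t, add_sub_cancel_right, ← ph1] at this
    exact this
  · intro t
    have := h3 (ph m t)
    rw [← ph1, ← ph2] at this; exact this
  · intro i j hi hj
    have := h4 (ph m i) (ph m j) (ph_ne m (by omega) (by omega)).symm
      (by rw [← ph1]; exact (ph_ne m (by omega) (by omega)).symm)
      (by rw [← ph1]; exact ph_ne m (by omega) (by omega))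
    rw [← ph1, ← ph1] at this; exact this
  · intro t
    exact h5 (ph m t) _ (left_mem_arc (h1 _))

lemma three_sorted {m : ℕ} (S : Finset (Fin (m + 3))) (hS : S.card = m) :
    ∃ a b c : Fin (m + 3), a < b ∧ b < c ∧ ∀ i, i ≠ a → i ≠ b → i ≠ c → i ∈ S := by
  have hc : Sᶜ.card = 3 := by rw [Finset.card_compl, hS, Fintype.card_fin]; omega
  let f := Sᶜ.orderEmbOfFin hc
  refine ⟨f 0, f 1, f 2, f.strictMono (by decide), f.strictMono (by decide), ?_⟩
  intro i h0 h1 h2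
  by_contra hi
  have : i ∈ Set.range f := by
    rw [Finset.range_orderEmbOfFin]; simpa using hi
  obtain ⟨k, rfl⟩ := this
  fin_cases k
  · exact h0 rfl
  · exact h1 rfl
  · exact h2 rfl

/-- A strictly-convex spherical polygon with `n = m + 3` edges is uniquely
determined, up to an isometry of the sphere, by all `n` of its interior
angles together with any `n - 3` of its edge lengths. -/
theorem statement7 (m : ℕ) (v w : Fin (m + 3) → E3)
    (hv : StrictlyConvexSphPolygon m v) (hw : StrictlyConvexSphPolygon m w)
    (hang : ∀ i : Fin (m + 3),
      sangle (v (i - 1)) (v i) (v (i + 1)) = sangle (w (i - 1)) (w i) (w (i + 1)))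
    (S : Finset (Fin (m + 3))) (hS : S.card = m)
    (hlen : ∀ i ∈ S, sdist (v i) (v (i + 1)) = sdist (w i) (w (i + 1))) :
    ∃ g : E3 ≃ₗᵢ[ℝ] E3, ∀ i, g (v i) = w i := by
  obtain ⟨u, h⟩ := toNP hv
  obtain ⟨u', h'⟩ := toNP hw
  obtain ⟨a, b, c, hab, hbc, hin⟩ := three_sorted S hS
  have hA : ∀ t, ⟪nn (fun t => v (ph m t)) t, nn (fun t => v (ph m t)) (t + 1)⟫ =
      ⟪nn (fun t => w (ph m t)) t, nn (fun t => w (ph m t)) (t + 1)⟫ := by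
    intro t
    have e := hang (ph m (t + 1))
    rw [← ph1, ph1 m t, add_sub_cancel_right, ← ph1] at e
    have e2 := congrArg Real.cos e
    have c1 := cos_sangle h t
    have c2 := cos_sangle h' t
    rw [show t + 1 + 1 = t + 2 by omega, c1, c2] at e2
    linarith
  obtain ⟨R, hR⟩ := congr_nat (by omega) h h' hA a.val b.val c.val hab hbc (by omega) (by
    intro j h1 h2 h3 h4
    have mem : ph m j ∈ S := by
      apply hin
      · rw [← ph_val m a]; exact (ph_ne m h1 h2).symm
      · rw [← ph_val m b]
        rcases lt_or_gt_of_ne h3 with q | q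
        · exact ph_ne m q (by omega)
        · exact (ph_ne m q (by omega)).symm
      · rw [← ph_val m c]
        rcases lt_or_gt_of_ne h4 with q | q
        · exact ph_ne m q (by omega)
        · exact (ph_ne m q (by omega)).symm
    have e := hlen _ mem
    rw [← ph1] at e
    have bd : ∀ x y : E3, ‖x‖ = 1 → ‖y‖ = 1 → -1 ≤ ⟪x, y⟫ ∧ ⟪x, y⟫ ≤ 1 := by
      intro x y hx hy
      have := abs_real_inner_le_norm x y
      rw [hx, hy, one_mul] at this
      exact abs_le.1 this
    have b1 := bd _ _ (hv.1 (ph m j)) (hv.1 (ph m (j + 1)))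
    have b2 := bd _ _ (hw.1 (ph m j)) (hw.1 (ph m (j + 1)))
    exact Real.arccos_injOn ⟨b1.1, b1.2⟩ ⟨b2.1, b2.2⟩ e)
  refine ⟨R, fun i => ?_⟩
  have := hR i.val
  simp only [ph_val] at this
  exact this
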